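/- Fix an integer m ≥ 2, a real α with 1/(n−Δ) < α < 1/(n−1), ε > 0, γ ∈ (0,1/2), and φ as described. Then there is a constant C > 0 such that for every irrational t ∈ ℬ_{m,α} and every real x, the limit defining U(t,x) exists and |U(t,x) − U*(t,x)| ≤ C·t^{αΔ/2^{n−1} − ε}. -/

import Mathlib

open Filter Finset MeasureTheory

/-- An approximant to a real number `t`: a reduced fraction `u/q` with `q ≥ 1`
and `|t - u/q| < 1/q²`. -/
def IsApproximant (t : ℝ) (u q : ℤ) : Prop :=
  1 ≤ q ∧ Int.gcd u q = 1 ∧ |t - (u : ℝ) / (q : ℝ)| < 1 / (q : ℝ) ^ 2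

/-- The set `𝒜_m`: `t ∈ [0,1]` such that for every real `M ≥ m` there is an
approximant `u/q` to `t` with `M^Δ < q ≤ M^(n-Δ)`. -/
def Aset (n : ℕ) (Δ : ℝ) (m : ℤ) : Set ℝ :=
  {t | t ∈ Set.Icc (0 : ℝ) 1 ∧ ∀ M : ℝ, (m : ℝ) ≤ M →
    ∃ u q : ℤ, IsApproximant t u q ∧ M ^ Δ < (q : ℝ) ∧ (q : ℝ) ≤ M ^ ((n : ℝ) - Δ)}

/-- The set `𝒜`: `t ∈ [0,1]` such that for all sufficiently large `M` there is an
approximant `u/q` to `t` with `M^Δ < q ≤ M^(n-Δ)`. -/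
def Aall (n : ℕ) (Δ : ℝ) : Set ℝ :=
  {t | t ∈ Set.Icc (0 : ℝ) 1 ∧ ∃ M₀ : ℝ, ∀ M : ℝ, M₀ ≤ M →
    ∃ u q : ℤ, IsApproximant t u q ∧ M ^ Δ < (q : ℝ) ∧ (q : ℝ) ≤ M ^ ((n : ℝ) - Δ)}

/-- The set `ℬ_{m,α}`: `t ∈ (0,1]` such that for every real `M ≥ m·t^(-α)` there is an
approximant `u/q` to `t` with `M^Δ < q ≤ M^(n-Δ)`. -/
def Bset (n : ℕ) (Δ : ℝ) (m : ℤ) (α : ℝ) : Set ℝ :=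
  {t | t ∈ Set.Ioc (0 : ℝ) 1 ∧ ∀ M : ℝ, (m : ℝ) * t ^ (-α) ≤ M →
    ∃ u q : ℤ, IsApproximant t u q ∧ M ^ Δ < (q : ℝ) ∧ (q : ℝ) ≤ M ^ ((n : ℝ) - Δ)}

/-- `e(ξ) = exp(2πiξ)`. -/
noncomputable def ee (ξ : ℝ) : ℂ := Complex.exp (2 * Real.pi * Complex.I * ξ)

/-- The partial sum defining `U(t,x)`:
`2γ + Σ_{0<|k|≤K} (sin(2πγk)/(πk))·e(t·k^n + x·k)`. -/
noncomputable def Upartial (n : ℕ) (γ t x : ℝ) (K : ℕ) : ℂ :=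
  Complex.ofReal (2 * γ) +
    ∑ k ∈ (Finset.Icc (-(K : ℤ)) (K : ℤ)).filter (· ≠ 0),
      Complex.ofReal (Real.sin (2 * Real.pi * γ * (k : ℝ)) / (Real.pi * (k : ℝ))) *
        ee (t * (k : ℝ) ^ n + x * (k : ℝ))

/-- The smooth cutoff `φ`: `C^∞`, `φ(x) = 1` for `|x| ≤ 1/2`, `φ(x) = 0` for `|x| ≥ 2`,
and `φ(x) + φ(1/x) = 1` for all `x ≠ 0`. -/
def GoodPhi (φ : ℝ → ℝ) : Prop :=
  ContDiff ℝ (⊤ : ℕ∞) φ ∧ (∀ x : ℝ, |x| ≤ 1 / 2 → φ x = 1) ∧ (∀ x : ℝ, 2 ≤ |x| → φ x = 0) ∧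
    (∀ x : ℝ, x ≠ 0 → φ x + φ x⁻¹ = 1)

/-- `U*(t,x) = 2γ + (1/π)·Σ_{k≠0} φ(k·t^α)·(sin(2πγk)/k)·e(t·k^n + x·k)`
(the `k = 0` term vanishes since `sin(0)/0 = 0`). -/
noncomputable def Ustar (n : ℕ) (γ : ℝ) (φ : ℝ → ℝ) (α t x : ℝ) : ℂ :=
  Complex.ofReal (2 * γ) + Complex.ofReal (1 / Real.pi) *
    ∑' k : ℤ,
      Complex.ofReal (φ ((k : ℝ) * t ^ α) * (Real.sin (2 * Real.pi * γ * (k : ℝ)) / (k : ℝ))) *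
        ee (t * (k : ℝ) ^ n + x * (k : ℝ))

theorem divisor_bound (ε : ℝ) (hε : 0 < ε) :
    ∃ C : ℝ, 1 ≤ C ∧ ∀ n : ℕ, n ≠ 0 → ((Nat.divisors n).card : ℝ) ≤ C * (n : ℝ) ^ ε := by
  have hl2 : 0 < Real.log 2 := Real.log_pos (by norm_num)
  set A : ℝ := max 1 (1 / (ε * Real.log 2)) with hA
  have hA1 : 1 ≤ A := le_max_left _ _
  have hA2 : 1 ≤ A * (ε * Real.log 2) := by
    have := le_max_right 1 (1 / (ε * Real.log 2))
    rwa [div_le_iff₀ (by positivity)] at this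
  set P : ℕ := ⌈(2 : ℝ) ^ (1 / ε)⌉₊ with hP
  refine ⟨A ^ (P + 1), one_le_pow₀ hA1, fun n hn => ?_⟩
  have key : ∀ p ∈ n.primeFactors, ((n.factorization p : ℝ) + 1) ≤
      (if p ≤ P then A else 1) * (((p : ℝ) ^ (n.factorization p)) ^ ε) := by
    intro p hp
    have hp2 : (2 : ℝ) ≤ p := by exact_mod_cast (Nat.prime_of_mem_primeFactors hp).two_le
    set a := n.factorization p
    have hcomm : ((p : ℝ) ^ a) ^ ε = ((p : ℝ) ^ ε) ^ a := by
      rw [← Real.rpow_natCast, ← Real.rpow_natCast, ← Real.rpow_mul (by positivity),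
        ← Real.rpow_mul (by positivity), mul_comm]
    split_ifs with h
    · have h1 : (2 : ℝ) ^ (ε * a) ≤ ((p : ℝ) ^ a) ^ ε := by
        rw [hcomm, ← Real.rpow_natCast, ← Real.rpow_mul (by positivity)]
        exact Real.rpow_le_rpow (by norm_num) hp2 (by positivity)
      have h2 : 1 + Real.log 2 * (ε * a) ≤ (2 : ℝ) ^ (ε * a) := by
        rw [Real.rpow_def_of_pos (by norm_num)]
        linarith [Real.add_one_le_exp (Real.log 2 * (ε * a))]
      calc (a : ℝ) + 1 ≤ A * (1 + Real.log 2 * (ε * a)) := by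
            have : (a : ℝ) * 1 ≤ a * (A * (ε * Real.log 2)) :=
              mul_le_mul_of_nonneg_left hA2 (by positivity)
            nlinarith
        _ ≤ _ := mul_le_mul_of_nonneg_left (h2.trans h1) (by positivity)
    · rw [one_mul, hcomm]
      have h1 : (2 : ℝ) ≤ (p : ℝ) ^ ε := by
        have h3 : (2 : ℝ) ^ (1 / ε) ≤ p := by
          refine (Nat.le_ceil _).trans ?_
          exact_mod_cast (not_le.mp h).le
        calc (2 : ℝ) = ((2 : ℝ) ^ (1 / ε)) ^ ε := by
              rw [← Real.rpow_mul (by norm_num)]; field_simp; simp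
          _ ≤ _ := Real.rpow_le_rpow (by positivity) h3 hε.le
      calc (a : ℝ) + 1 ≤ 2 ^ a := by exact_mod_cast Nat.lt_two_pow_self
        _ ≤ _ := pow_le_pow_left₀ (by norm_num) h1 a
  rw [Nat.card_divisors hn]
  push_cast
  refine (Finset.prod_le_prod (fun _ _ => by positivity) key).trans ?_
  rw [Finset.prod_mul_distrib]
  have e1 : ∏ p ∈ n.primeFactors, (((p : ℝ) ^ (n.factorization p)) ^ ε) = (n : ℝ) ^ ε := by
    rw [Real.finsetProd_rpow _ _ (fun _ _ => by positivity)]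
    congr 1
    have := Nat.prod_factorization_pow_eq_self hn
    conv_rhs => rw [← this]
    rw [Finsupp.prod, Nat.support_factorization]
    push_cast
    rfl
  rw [e1]
  refine mul_le_mul_of_nonneg_right ?_ (by positivity)
  rw [Finset.prod_ite, Finset.prod_const, Finset.prod_const_one, mul_one]
  refine pow_le_pow_right₀ hA1 ?_
  calc _ ≤ (Finset.range (P + 1)).card := by
        apply Finset.card_le_card
        intro p hp
        simp only [Finset.mem_filter] at hp
        simp only [Finset.mem_range]; omega
    _ = _ := by simp

noncomputable def nd (x : ℝ) : ℝ := |x - round x|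

noncomputable def gg (N x : ℝ) : ℝ := N / max 1 (N * nd x)

noncomputable def TT (N : ℕ) : ℕ → ℝ → ℝ
  | 0, θ => gg N θ
  | d + 1, θ => ∑ h ∈ Finset.Ioo (-(N : ℤ)) (N : ℤ), TT N d (((d : ℝ) + 2) * (h : ℝ) * θ)

theorem nd_nonneg (x : ℝ) : 0 ≤ nd x := abs_nonneg _

theorem gg_nonneg {N : ℝ} (hN : 0 ≤ N) (x : ℝ) : 0 ≤ gg N x := by
  unfold gg; positivity

theorem gg_le {N : ℝ} (hN : 0 ≤ N) (x : ℝ) : gg N x ≤ N :=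
  div_le_self hN (le_max_left _ _)

theorem gg_le_inv {N : ℝ} (hN : 0 < N) (x c : ℝ) (hc : 0 < c) (h : c ≤ nd x) : gg N x ≤ 1 / c := by
  unfold gg
  rw [div_le_div_iff₀ (by positivity) hc, one_mul]
  exact (mul_le_mul_of_nonneg_left h hN.le).trans (le_max_right _ _)

theorem le_gg {N S x : ℝ} (h1 : S ≤ N) (hN : 0 ≤ N) (h2 : S * nd x ≤ 1) : S ≤ gg N x := by
  unfold gg
  rw [le_div_iff₀ (by positivity)]
  rcases max_cases 1 (N * nd x) with h | h
  · rw [h.1]; linarith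
  · rw [h.1]; nlinarith

theorem ee_add (x y : ℝ) : ee (x + y) = ee x * ee y := by
  unfold ee; rw [← Complex.exp_add]; push_cast; ring_nf

theorem ee_norm (x : ℝ) : ‖ee x‖ = 1 := by
  unfold ee
  rw [show (2 * Real.pi * Complex.I * x : ℂ) = ((2 * Real.pi * x : ℝ) : ℂ) * Complex.I by
    push_cast; ring]
  exact Complex.norm_exp_ofReal_mul_I _

theorem ee_int (n : ℤ) : ee n = 1 := by
  unfold ee
  rw [Complex.exp_eq_one_iff]
  exact ⟨n, by push_cast; ring⟩

theorem ee_conj (x : ℝ) : (starRingEnd ℂ) (ee x) = ee (-x) := by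
  unfold ee
  rw [← Complex.exp_conj]
  congr 1
  simp only [map_mul, Complex.conj_ofReal, Complex.conj_I, map_ofNat]
  push_cast
  ring

theorem ee_sub_one (x : ℝ) : 4 * nd x ≤ ‖ee x - 1‖ := by
  have h1 : ee x = ee (x - round x) := by
    conv_lhs => rw [show x = (x - round x) + (round x : ℤ) by ring, ee_add, ee_int, mul_one]
  rw [h1]
  unfold nd
  have hy := abs_sub_round x
  set y := x - round x
  unfold ee
  rw [show (2 * Real.pi * Complex.I * y : ℂ) = Complex.I * ((2 * Real.pi * y : ℝ) : ℂ) by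
    push_cast; ring, Complex.norm_exp_I_mul_ofReal_sub_one, Real.norm_eq_abs, abs_mul]
  have h2 : |Real.sin (2 * Real.pi * y / 2)| = |Real.sin (Real.pi * |y|)| := by
    rw [show 2 * Real.pi * y / 2 = Real.pi * y by ring]
    rcases abs_cases y with h | h
    · rw [h.1]
    · rw [h.1, mul_neg, Real.sin_neg, abs_neg]
  rw [h2]
  have hpi := Real.pi_pos
  have h3 := Real.mul_le_sin (x := Real.pi * |y|) (by positivity) (by nlinarith)
  have h4 : 2 / Real.pi * (Real.pi * |y|) = 2 * |y| := by field_simp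
  rw [h4] at h3
  have := le_abs_self (Real.sin (Real.pi * |y|))
  simp only [abs_two]
  linarith

theorem geom_bound (θ c : ℝ) (a b : ℤ) :
    ‖∑ k ∈ Finset.Ico a b, ee (c + θ * k)‖ * nd θ ≤ 1 := by
  have h1 : ‖(ee θ - 1) * ∑ k ∈ Finset.Ico a b, ee (c + θ * k)‖ ≤ 2 := by
    rcases le_or_gt a b with hab | hab
    · have : (ee θ - 1) * ∑ k ∈ Finset.Ico a b, ee (c + θ * k) =
          ee (c + θ * b) - ee (c + θ * a) := by
        induction b, hab using Int.leInduction with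
        | base => simp
        | succ b hab ih =>
          have : Finset.Ico a (b + 1) = insert b (Finset.Ico a b) := by
            ext k; simp only [Finset.mem_insert, Finset.mem_Ico]; omega
          rw [this, Finset.sum_insert (by simp), mul_add, ih]
          have : ee (c + θ * ((b + 1 : ℤ) : ℝ)) = ee θ * ee (c + θ * b) := by
            rw [← ee_add]; push_cast; ring_nf
          rw [this]; ring
      rw [this]
      refine (norm_sub_le _ _).trans ?_
      rw [ee_norm, ee_norm]; norm_num
    · rw [Finset.Ico_eq_empty (by omega)]; simp
  rw [norm_mul] at h1
  have h2 := ee_sub_one θ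
  have h3 := mul_le_mul_of_nonneg_right h2 (norm_nonneg (∑ k ∈ Finset.Ico a b, ee (c + θ * k)))
  nlinarith

theorem vdc (f : ℤ → ℝ) (a b : ℤ) (N : ℕ) (hN : b ≤ a + N) :
    ‖∑ k ∈ Finset.Ico a b, ee (f k)‖ ^ 2 ≤ ∑ h ∈ Finset.Ioo (-(N : ℤ)) (N : ℤ),
      ‖∑ k ∈ Finset.Ico (max a (a - h)) (min b (b - h)), ee (f (k + h) - f k)‖ := by
  have h1 : (∑ k ∈ Finset.Ico a b, ee (f k)) * (starRingEnd ℂ) (∑ k ∈ Finset.Ico a b, ee (f k)) =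
      ∑ h ∈ Finset.Ioo (-(N : ℤ)) (N : ℤ),
        ∑ k ∈ Finset.Ico (max a (a - h)) (min b (b - h)), ee (f (k + h) - f k) := by
    rw [map_sum, Finset.sum_mul_sum, ← Finset.sum_product']
    rw [← Finset.sum_fiberwise_of_maps_to (t := Finset.Ioo (-(N : ℤ)) (N : ℤ))
      (g := fun x : ℤ × ℤ => x.1 - x.2)]
    · refine Finset.sum_congr rfl fun h _ => ?_
      symm
      refine Finset.sum_bij (fun k _ => (k + h, k)) ?_ ?_ ?_ ?_
      · intro k hk
        simp only [Finset.mem_Ico, Finset.mem_filter, Finset.mem_product] at hk ⊢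
        omega
      · intro k _ k' _ h'
        exact (Prod.mk.inj h').2
      · rintro ⟨l, k⟩ hx
        simp only [Finset.mem_Ico, Finset.mem_filter, Finset.mem_product] at hx
        refine ⟨k, ?_, ?_⟩
        · simp only [Finset.mem_Ico]; omega
        · simp only [Prod.mk.injEq, and_true]; omega
      · intro k _
        rw [ee_conj, ← ee_add, sub_eq_add_neg]
    · rintro ⟨l, k⟩ hx
      simp only [Finset.mem_Ico, Finset.mem_product, Finset.mem_Ioo] at hx ⊢
      omega
  have h2 : ‖∑ k ∈ Finset.Ico a b, ee (f k)‖ ^ 2 =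
      ‖(∑ k ∈ Finset.Ico a b, ee (f k)) * (starRingEnd ℂ) (∑ k ∈ Finset.Ico a b, ee (f k))‖ := by
    rw [norm_mul, RCLike.norm_conj, sq]
  rw [h2, h1]
  exact norm_sum_le _ _

open Polynomial in
theorem poly_diff (d : ℕ) (p : ℝ[X]) (hp : p.natDegree ≤ d + 2) (h : ℝ) :
    (p.comp (X + C h) - p).natDegree ≤ d + 1 ∧
      (p.comp (X + C h) - p).coeff (d + 1) = ((d : ℝ) + 2) * h * p.coeff (d + 2) := by
  have hc : ∀ j, (p.comp (X + C h)).coeff j =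
      ∑ i ∈ Finset.range (d + 3), p.coeff i * (h ^ (i - j) * (i.choose j : ℝ)) := by
    intro j
    conv_lhs => rw [p.as_sum_range' (d + 3) (by omega)]
    rw [← Polynomial.coe_compRingHom_apply, map_sum, Polynomial.finsetSum_coeff]
    refine Finset.sum_congr rfl fun i _ => ?_
    rw [Polynomial.coe_compRingHom_apply, Polynomial.monomial_comp, Polynomial.coeff_C_mul,
      Polynomial.coeff_X_add_C_pow]
  constructor
  · rw [Polynomial.natDegree_le_iff_coeff_eq_zero]
    intro j hj
    rw [Polynomial.coeff_sub, hc]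
    rcases Nat.lt_or_ge (d + 2) j with h' | h'
    · rw [Polynomial.coeff_eq_zero_of_natDegree_lt (by omega), sub_zero]
      refine Finset.sum_eq_zero fun i hi => ?_
      rw [Finset.mem_range] at hi
      rw [Nat.choose_eq_zero_of_lt (by omega)]; simp
    · obtain rfl : j = d + 2 := by omega
      rw [Finset.sum_range_succ, Finset.sum_eq_zero]
      · simp
      · intro i hi
        rw [Finset.mem_range] at hi
        rw [Nat.choose_eq_zero_of_lt (by omega)]; simp
  · rw [Polynomial.coeff_sub, hc, Finset.sum_range_succ, Finset.sum_range_succ,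
      Finset.sum_eq_zero]
    · have e : (d + 2).choose (d + 1) = d + 2 := Nat.choose_succ_self_right (d + 1)
      rw [e, show d + 2 - (d + 1) = 1 by omega]
      simp; ring
    · intro i hi
      rw [Finset.mem_range] at hi
      rw [Nat.choose_eq_zero_of_lt (by omega)]; simp

open Polynomial in
theorem weyl_diff (N : ℕ) (hN : 1 ≤ N) : ∀ (d : ℕ) (p : ℝ[X]), p.natDegree ≤ d + 1 →
    ∀ a b : ℤ, b ≤ a + N → ‖∑ k ∈ Finset.Ico a b, ee (p.eval (k : ℝ))‖ ^ (2 ^ d) ≤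
      (2 * (N : ℝ)) ^ (2 ^ d - (d + 1)) * TT N d (p.coeff (d + 1)) := by
  have hN0 : (1 : ℝ) ≤ N := by exact_mod_cast hN
  intro d
  induction d with
  | zero =>
    intro p hp a b hab
    simp only [TT, pow_zero, zero_add, pow_one, Nat.sub_self, one_mul]
    have e : ∀ k : ℤ, p.eval (k : ℝ) = p.coeff 0 + p.coeff 1 * k := by
      intro k
      rw [Polynomial.eval_eq_sum_range' (n := 2) (by omega)]
      simp [Finset.sum_range_succ]
    simp only [e]
    refine le_gg ?_ (by positivity) (geom_bound _ _ _ _)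
    refine (norm_sum_le _ _).trans ?_
    simp only [ee_norm, Finset.sum_const, Int.card_Ico, nsmul_eq_mul, mul_one]
    have : (b - a).toNat ≤ N := by omega
    exact_mod_cast this
  | succ d ih =>
    intro p hp a b hab
    have h1 := vdc (fun k => p.eval (k : ℝ)) a b N hab
    have hd1 : d + 1 ≤ 2 ^ d := Nat.lt_two_pow_self
    obtain ⟨s, hs⟩ : ∃ s, 2 ^ d = s + 1 := ⟨2 ^ d - 1, by omega⟩
    set H := Finset.Ioo (-(N : ℤ)) (N : ℤ)
    set F : ℤ → ℝ := fun h => ‖∑ k ∈ Finset.Ico (max a (a - h)) (min b (b - h)),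
      ee (p.eval ((k + h : ℤ) : ℝ) - p.eval (k : ℝ))‖ with hF
    have hcard : (H.card : ℝ) ≤ 2 * N := by
      have : H.card ≤ 2 * N := by rw [Int.card_Ioo]; omega
      exact_mod_cast this
    have hcard0 : 0 < (H.card : ℝ) := by
      have : 0 < H.card := by rw [Int.card_Ioo]; omega
      exact_mod_cast this
    have h2 : (∑ h ∈ H, F h) ^ (s + 1) ≤ (2 * (N : ℝ)) ^ s * ∑ h ∈ H, F h ^ (s + 1) := by
      have := pow_sum_div_card_le_sum_pow (s := H) (f := F) (fun _ _ => norm_nonneg _) s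
      rw [div_le_iff₀ (by positivity)] at this
      rw [mul_comm]
      refine this.trans (mul_le_mul_of_nonneg_left (pow_le_pow_left₀ hcard0.le hcard s) ?_)
      exact Finset.sum_nonneg fun _ _ => pow_nonneg (norm_nonneg _) _
    have h3 : ∀ h ∈ H, F h ^ (s + 1) ≤ (2 * (N : ℝ)) ^ (2 ^ d - (d + 1)) *
        TT N d (((d : ℝ) + 2) * (h : ℝ) * p.coeff (d + 2)) := by
      intro h _
      have hq := poly_diff d p hp h
      have := ih (p.comp (X + C (h : ℝ)) - p) hq.1 (max a (a - h)) (min b (b - h)) (by omega)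
      rw [hq.2, hs] at this
      rw [hs]
      refine le_trans (le_of_eq ?_) this
      simp only [hF]
      congr 2
      refine Finset.sum_congr rfl fun k _ => ?_
      simp
    calc ‖∑ k ∈ Finset.Ico a b, ee (p.eval (k : ℝ))‖ ^ (2 ^ (d + 1))
        = (‖∑ k ∈ Finset.Ico a b, ee (p.eval (k : ℝ))‖ ^ 2) ^ (s + 1) := by
          rw [← pow_mul, ← hs, pow_succ']
      _ ≤ (∑ h ∈ H, F h) ^ (s + 1) := pow_le_pow_left₀ (by positivity) h1 _
      _ ≤ _ := h2
      _ ≤ (2 * (N : ℝ)) ^ s * ∑ h ∈ H, (2 * (N : ℝ)) ^ (2 ^ d - (d + 1)) *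
        TT N d (((d : ℝ) + 2) * (h : ℝ) * p.coeff (d + 2)) :=
          mul_le_mul_of_nonneg_left (Finset.sum_le_sum h3) (by positivity)
      _ = _ := by
          rw [← Finset.mul_sum, ← mul_assoc, ← pow_add]
          have : s + (2 ^ d - (d + 1)) = 2 ^ (d + 1) - (d + 1 + 1) := by
            rw [pow_succ]; omega
          rw [this]
          rfl

theorem block_point (N : ℝ) (hN : 0 < N) (θ y : ℝ) (u : ℤ) (q : ℕ) (hq : 1 ≤ q)
    (h : |θ - (u : ℝ) / q| < 1 / (q : ℝ) ^ 2) (G : ℕ → ℝ)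
    (hG : G = fun s : ℕ => if s < 3 then N else 3 * q / (s : ℝ)) (j : ℕ) (hj : j < q) :
    gg N (y + j * θ) ≤ G (((⌊q * y⌋ + j * u) % q).toNat) +
      G (q - ((⌊q * y⌋ + j * u) % q).toNat) := by
  have hq0 : (0 : ℝ) < q := by exact_mod_cast hq
  have hG0 : ∀ s, 0 ≤ G s := by
    intro s; rw [hG]; simp only; split_ifs <;> positivity
  have key : ∀ s : ℕ, ((s : ℝ) - 2) / q ≤ nd (y + j * θ) → gg N (y + j * θ) ≤ G s := by
    intro s hs
    rw [hG]; simp only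
    split_ifs with h3
    · exact gg_le hN.le _
    · have hs3 : (3 : ℝ) ≤ s := by exact_mod_cast not_lt.mp h3
      have h4 : (0 : ℝ) < s - 2 := by linarith
      refine (gg_le_inv hN _ _ (by positivity) hs).trans ?_
      rw [one_div_div, div_le_div_iff₀ h4 (by linarith)]
      nlinarith
  set c := ⌊q * y⌋ with hc
  set v := c + j * u with hv
  have hr0 : 0 ≤ v % q := Int.emod_nonneg _ (by omega)
  have hr1 : v % q < q := Int.emod_lt_of_pos _ (by omega)
  have hdm := Int.emod_add_mul_ediv v q
  set z := v / q
  set r := (v % q).toNat with hr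
  have hrv : ((r : ℕ) : ℤ) = v % q := Int.toNat_of_nonneg hr0
  rw [← hrv] at hdm
  have hdmR : (r : ℝ) + q * z = c + j * u := by
    have : (r : ℤ) + q * z = c + j * u := by rw [hdm]
    exact_mod_cast this
  have hrq : r < q := by omega
  set w := round (y + j * θ) with hw
  have hjq : (j : ℝ) ≤ q := by exact_mod_cast hj.le
  have e1 : |(j : ℝ) * (q * (θ - u / q))| ≤ 1 := by
    rw [abs_mul, abs_mul, abs_of_nonneg (Nat.cast_nonneg j), abs_of_pos hq0]
    calc (j : ℝ) * (q * |θ - u / q|) ≤ q * (q * (1 / (q : ℝ) ^ 2)) := by gcongr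
      _ = 1 := by field_simp
  have e2 := abs_le.mp e1
  have f1 := Int.floor_le (q * y)
  have f2 := Int.lt_floor_add_one (q * y)
  rw [← hc] at f1 f2
  have e3 : q * (y + j * θ - w) = q * (z - w) + r + (q * y - c) + j * (q * (θ - u / q)) := by
    have : (j : ℝ) * (q * (θ - u / q)) = j * q * θ - j * u := by field_simp
    rw [this]; linarith
  rcases le_or_gt w z with hwz | hwz
  · have hwz' : (w : ℝ) ≤ z := by exact_mod_cast hwz
    have : gg N (y + j * θ) ≤ G r := by
      apply key
      rw [div_le_iff₀ hq0]
      unfold nd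
      have := mul_le_mul_of_nonneg_left (le_abs_self (y + j * θ - w)) hq0.le
      have h5 : 0 ≤ (q : ℝ) * (z - w) := mul_nonneg hq0.le (by linarith)
      rw [← hw]
      nlinarith
    linarith [hG0 (q - r)]
  · have hwz' : (z : ℝ) + 1 ≤ w := by exact_mod_cast hwz
    have : gg N (y + j * θ) ≤ G (q - r) := by
      apply key
      rw [div_le_iff₀ hq0]
      unfold nd
      rw [Nat.cast_sub hrq.le]
      have := mul_le_mul_of_nonneg_left (neg_abs_le (y + j * θ - w)) hq0.le
      have h5 : 0 ≤ (q : ℝ) * (w - z - 1) := mul_nonneg hq0.le (by linarith)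
      rw [← hw]
      nlinarith
    linarith [hG0 r]

theorem block_sum (N : ℝ) (hN : 0 < N) (θ y : ℝ) (u : ℤ) (q : ℕ) (hq : 1 ≤ q)
    (hco : Int.gcd u q = 1) (h : |θ - (u : ℝ) / q| < 1 / (q : ℝ) ^ 2) :
    ∑ j ∈ Finset.range q, gg N (y + j * θ) ≤ 6 * N + 6 * q * (1 + Real.log q) := by
  set G : ℕ → ℝ := fun s => if s < 3 then N else 3 * q / s with hG
  have hG0 : ∀ s, 0 ≤ G s := by
    intro s; simp only [hG]; split_ifs <;> positivity
  set ρ : ℕ → ℕ := fun j => ((⌊q * y⌋ + j * u) % q).toNat with hρ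
  have hinj : Set.InjOn ρ (Finset.range q : Set ℕ) := by
    intro j hj j' hj' e
    simp only [Finset.coe_range, Set.mem_Iio] at hj hj'
    simp only [hρ] at e
    have a1 : 0 ≤ (⌊q * y⌋ + j * u) % q := Int.emod_nonneg _ (by omega)
    have a2 : 0 ≤ (⌊q * y⌋ + j' * u) % q := Int.emod_nonneg _ (by omega)
    have e' : (⌊q * y⌋ + j * u) % q = (⌊q * y⌋ + j' * u) % q := by omega
    have d1 : (q : ℤ) ∣ (⌊q * y⌋ + j * u) - (⌊q * y⌋ + j' * u) := Int.ModEq.dvd e'.symm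
    have d2 : (q : ℤ) ∣ u * ((j : ℤ) - j') := by
      convert d1 using 1; ring
    have d3 : (q : ℤ) ∣ (j : ℤ) - j' :=
      Int.dvd_of_dvd_mul_right_of_gcd_one d2 (by rw [Int.gcd_comm]; exact hco)
    have d4 := Int.eq_zero_of_abs_lt_dvd d3 (by rw [abs_lt]; constructor <;> omega)
    omega
  have hmaps : Finset.image ρ (Finset.range q) ⊆ Finset.range q := by
    intro s hs
    simp only [Finset.mem_image, Finset.mem_range, hρ] at hs ⊢
    obtain ⟨j, _, rfl⟩ := hs
    have : (⌊q * y⌋ + j * u) % q < q := Int.emod_lt_of_pos _ (by omega)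
    omega
  have hH : ∑ s ∈ Finset.range q, G (s + 1) ≤ 2 * N + 3 * q * (1 + Real.log q) := by
    have hle : ∀ s ∈ Finset.range q, G (s + 1) ≤ (if s < 2 then N else 0) +
        3 * q * (1 / ((s : ℝ) + 1)) := by
      intro s _
      simp only [hG]
      by_cases hs : s < 2
      · rw [if_pos (by omega), if_pos hs]
        have : 0 ≤ 3 * (q : ℝ) * (1 / ((s : ℝ) + 1)) := by positivity
        linarith
      · rw [if_neg (by omega), if_neg hs]
        push_cast
        rw [zero_add, mul_one_div]
    refine (Finset.sum_le_sum hle).trans ?_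
    rw [Finset.sum_add_distrib, ← Finset.mul_sum]
    refine add_le_add ?_ (mul_le_mul_of_nonneg_left ?_ (by positivity))
    · rw [← Finset.sum_filter, Finset.sum_const, nsmul_eq_mul]
      refine mul_le_mul_of_nonneg_right ?_ hN.le
      have : (Finset.filter (fun s => s < 2) (Finset.range q)).card ≤ (Finset.range 2).card := by
        apply Finset.card_le_card
        intro s hs; simp only [Finset.mem_filter] at hs; simpa using hs.2
      rw [Finset.card_range] at this
      exact_mod_cast this
    · have := harmonic_le_one_add_log q
      refine le_trans (le_of_eq ?_) this
      rw [harmonic]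
      push_cast
      simp
  calc ∑ j ∈ Finset.range q, gg N (y + j * θ)
      ≤ ∑ j ∈ Finset.range q, (G (ρ j) + G (q - ρ j)) :=
        Finset.sum_le_sum fun j hj =>
          block_point N hN θ y u q hq h G hG j (Finset.mem_range.mp hj)
    _ = ∑ s ∈ Finset.image ρ (Finset.range q), (G s + G (q - s)) := by
        rw [Finset.sum_image hinj]
    _ ≤ ∑ s ∈ Finset.range q, (G s + G (q - s)) :=
        Finset.sum_le_sum_of_subset_of_nonneg hmaps
          fun _ _ _ => add_nonneg (hG0 _) (hG0 _)
    _ = ∑ s ∈ Finset.range q, G s + ∑ s ∈ Finset.range q, G (s + 1) := by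
        rw [Finset.sum_add_distrib]
        congr 1
        rw [← Finset.sum_range_reflect (fun s => G (s + 1)) q]
        refine Finset.sum_congr rfl fun s hs => ?_
        rw [Finset.mem_range] at hs
        congr 1; omega
    _ ≤ (∑ s ∈ Finset.range q, G (s + 1) + G 0) + ∑ s ∈ Finset.range q, G (s + 1) := by
        rw [← Finset.sum_range_succ' G q, Finset.sum_range_succ]
        linarith [hG0 q]
    _ ≤ _ := by
        have : G 0 = N := by simp [hG]
        rw [this]; linarith

theorem long_sum (N : ℝ) (hN : 0 < N) (θ : ℝ) (u : ℤ) (q : ℕ) (hq : 1 ≤ q)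
    (hco : Int.gcd u q = 1) (h : |θ - (u : ℝ) / q| < 1 / (q : ℝ) ^ 2) (X : ℕ) :
    ∑ j ∈ Finset.Icc 1 X, gg N (j * θ) ≤
      ((X : ℝ) / q + 1) * (6 * N + 6 * q * (1 + Real.log q)) := by
  have hb : ∀ K : ℕ, ∑ j ∈ Finset.range (K * q), gg N (1 * θ + j * θ) ≤
      K * (6 * N + 6 * q * (1 + Real.log q)) := by
    intro K
    induction K with
    | zero => simp
    | succ K ih =>
      rw [Nat.succ_mul, Finset.sum_range_add]
      have := block_sum N hN θ (1 * θ + (K * q) * θ) u q hq hco h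
      have e : ∀ j : ℕ, 1 * θ + ((K * q + j : ℕ) : ℝ) * θ = 1 * θ + (K * q) * θ + j * θ := by
        intro j; push_cast; ring
      simp only [e]
      push_cast
      linarith
  have hq0 : (0 : ℝ) < q := by exact_mod_cast hq
  have hlog : 0 ≤ Real.log q := Real.log_natCast_nonneg q
  have h1 : ∑ j ∈ Finset.Icc 1 X, gg N (j * θ) = ∑ j ∈ Finset.range X, gg N (1 * θ + j * θ) := by
    have e : Finset.Icc 1 X = Finset.Ico (0 + 1) (X + 1) := by
      ext k; simp only [Finset.mem_Icc, Finset.mem_Ico]; omega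
    rw [e, ← Finset.sum_Ico_add' (fun j : ℕ => gg N (j * θ)) 0 X 1, Finset.range_eq_Ico]
    refine Finset.sum_congr rfl fun j _ => ?_
    congr 1; push_cast; ring
  rw [h1]
  have hK : X ≤ (X / q + 1) * q := by
    have := Nat.lt_div_mul_add (a := X) hq
    rw [Nat.add_mul]; omega
  refine (Finset.sum_le_sum_of_subset_of_nonneg (Finset.range_mono hK)
    fun _ _ _ => gg_nonneg hN.le _).trans ((hb _).trans ?_)
  refine mul_le_mul_of_nonneg_right ?_ (by positivity)
  push_cast
  have := Nat.cast_div_le (α := ℝ) (m := X) (n := q)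
  linarith

theorem nd_neg (x : ℝ) : nd (-x) = nd x := by
  unfold nd
  apply le_antisymm
  · refine (round_le (-x) (-round x)).trans (le_of_eq ?_)
    push_cast
    rw [← abs_neg]; ring_nf
  · refine (round_le x (-round (-x))).trans (le_of_eq ?_)
    push_cast
    rw [← abs_neg]; ring_nf

theorem gg_neg (N x : ℝ) : gg N (-x) = gg N x := by
  unfold gg; rw [nd_neg]

theorem TT_neg (N : ℕ) : ∀ (d : ℕ) (θ : ℝ), TT N d (-θ) = TT N d θ := by
  intro d
  induction d with
  | zero => intro θ; exact gg_neg _ _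
  | succ d ih =>
    intro θ
    simp only [TT]
    refine Finset.sum_congr rfl fun h _ => ?_
    rw [← ih]; ring_nf

theorem TT_nonneg (N : ℕ) : ∀ (d : ℕ) (θ : ℝ), 0 ≤ TT N d θ := by
  intro d
  induction d with
  | zero => intro θ; exact gg_nonneg (by positivity) _
  | succ d ih =>
    intro θ
    exact Finset.sum_nonneg fun h _ => ih _

theorem TT_trivial (N : ℕ) : ∀ (d : ℕ) (θ : ℝ), TT N d θ ≤ (2 * (N : ℝ)) ^ d * N := by
  intro d
  induction d with
  | zero => intro θ; simpa using! gg_le (by positivity) _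
  | succ d ih =>
    intro θ
    simp only [TT]
    refine (Finset.sum_le_sum fun h _ => ih _).trans ?_
    rw [Finset.sum_const, nsmul_eq_mul, pow_succ']
    have : ((Finset.Ioo (-(N : ℤ)) N).card : ℝ) ≤ 2 * N := by
      have : (Finset.Ioo (-(N : ℤ)) N).card ≤ 2 * N := by rw [Int.card_Ioo]; omega
      exact_mod_cast this
    rw [mul_assoc (2 * (N : ℝ))]
    exact mul_le_mul_of_nonneg_right this (by positivity)

theorem sum_sym_le (F : ℤ → ℝ) (hF : ∀ h, 0 ≤ F h) (hs : ∀ h, F (-h) = F h) (N : ℕ) :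
    ∑ h ∈ Finset.Ioo (-(N : ℤ)) (N : ℤ), F h ≤ 2 * ∑ h ∈ Finset.range N, F h := by
  induction N with
  | zero => simp
  | succ N ih =>
    have hsub : Finset.Ioo (-((N + 1 : ℕ) : ℤ)) ((N + 1 : ℕ) : ℤ) ⊆
        Finset.Ioo (-(N : ℤ)) (N : ℤ) ∪ ({(N : ℤ)} ∪ {-(N : ℤ)}) := by
      intro k hk
      simp only [Finset.mem_union, Finset.mem_Ioo, Finset.mem_singleton] at hk ⊢
      push_cast at hk
      omega
    have hun : ∀ A B : Finset ℤ, ∑ h ∈ A ∪ B, F h ≤ ∑ h ∈ A, F h + ∑ h ∈ B, F h := by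
      intro A B
      rw [← Finset.sum_union_inter]
      linarith [Finset.sum_nonneg (s := A ∩ B) (f := F) fun h _ => hF h]
    have h1 := Finset.sum_le_sum_of_subset_of_nonneg hsub (f := F) fun h _ _ => hF h
    have h2 := hun (Finset.Ioo (-(N : ℤ)) (N : ℤ)) ({(N : ℤ)} ∪ {-(N : ℤ)})
    have h3 := hun {(N : ℤ)} {-(N : ℤ)}
    rw [Finset.sum_singleton, Finset.sum_singleton, hs] at h3
    rw [Finset.sum_range_succ]
    linarith

theorem mult_sum (g : ℕ → ℝ) (hg : ∀ k, 0 ≤ g k) (e N Y : ℕ) (he : 1 ≤ e) (D : ℝ)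
    (hD : ∀ k ∈ Finset.Icc 1 (e * Y * N), ((Nat.divisors k).card : ℝ) ≤ D) :
    ∑ h ∈ Finset.Ico 1 N, ∑ k ∈ Finset.Icc 1 Y, g (k * (e * h)) ≤
      D * ∑ k ∈ Finset.Icc 1 (e * Y * N), g k := by
  rw [← Finset.sum_product', ← Finset.sum_fiberwise_of_maps_to
    (t := Finset.Icc 1 (e * Y * N)) (g := fun x : ℕ × ℕ => x.2 * (e * x.1)), Finset.mul_sum]
  · refine Finset.sum_le_sum fun s hs => ?_
    have : ∀ x ∈ (Finset.Ico 1 N ×ˢ Finset.Icc 1 Y).filter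
        (fun x : ℕ × ℕ => x.2 * (e * x.1) = s), g (x.2 * (e * x.1)) = g s := by
      intro x hx
      rw [(Finset.mem_filter.mp hx).2]
    rw [Finset.sum_congr rfl this, Finset.sum_const, nsmul_eq_mul]
    refine mul_le_mul_of_nonneg_right (le_trans ?_ (hD s hs)) (hg _)
    rw [Nat.cast_le]
    have hs1 := (Finset.mem_Icc.mp hs).1
    refine Finset.card_le_card_of_injOn Prod.fst ?_ ?_
    · rintro ⟨h, k⟩ hx
      simp only [Finset.coe_filter, Set.mem_ofPred_eq] at hx
      simp only [Finset.mem_coe, Nat.mem_divisors]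
      exact ⟨⟨k * e, by rw [← hx.2]; ring⟩, by omega⟩
    · rintro ⟨h, k⟩ hx ⟨h', k'⟩ hx' hh
      simp only [Finset.coe_filter, Set.mem_ofPred_eq, Finset.mem_product, Finset.mem_Ico] at hx hx'
      simp only at hh
      subst hh
      have h0 : 0 < e * h := Nat.mul_pos he hx.1.1.1
      have := Nat.eq_of_mul_eq_mul_right h0 (hx.2.trans hx'.2.symm)
      rw [this]
  · rintro ⟨h, k⟩ hx
    simp only [Finset.mem_product, Finset.mem_Ico, Finset.mem_Icc] at hx ⊢
    constructor
    · have : 0 < k * (e * h) := Nat.mul_pos hx.2.1 (Nat.mul_pos he hx.1.1)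
      omega
    · calc k * (e * h) ≤ Y * (e * N) :=
            Nat.mul_le_mul hx.2.2 (Nat.mul_le_mul_left _ hx.1.2.le)
        _ = _ := by ring

theorem TT_bound : ∀ (d : ℕ) (ε : ℝ), 0 < ε → ∃ C : ℝ, 0 ≤ C ∧ ∀ N : ℕ, 1 ≤ N → ∀ θ : ℝ,
    TT N d θ ≤ C * (N : ℝ) ^ ε * ((N : ℝ) ^ d +
      ∑ k ∈ Finset.Icc 1 ((d + 1).factorial * N ^ d), gg N (k * θ)) := by
  intro d
  induction d with
  | zero =>
    intro ε hε
    refine ⟨1, by norm_num, fun N hN θ => ?_⟩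
    have hN1 : (1 : ℝ) ≤ N := by exact_mod_cast hN
    have h1 : (1 : ℝ) ≤ (N : ℝ) ^ ε := Real.one_le_rpow hN1 hε.le
    have h2 := gg_nonneg (N := N) (by positivity) θ
    simp only [TT, zero_add, Nat.factorial_one, pow_zero, mul_one, Finset.Icc_self,
      Finset.sum_singleton, Nat.cast_one, one_mul]
    nlinarith
  | succ d ih =>
    intro ε hε
    obtain ⟨C, hC, hT⟩ := ih (ε / 2) (by positivity)
    obtain ⟨C', hC', hdiv⟩ := divisor_bound (ε / (2 * (d + 1))) (by positivity)
    set η := ε / (2 * ((d : ℝ) + 1)) with hη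
    have hη0 : 0 < η := by positivity
    set K : ℝ := C' * (((d + 2).factorial : ℝ) ^ η) with hK
    have hK0 : 0 ≤ K := by positivity
    refine ⟨2 * (2 ^ d + C + C * K), by positivity, fun N hN θ => ?_⟩
    have hN1 : (1 : ℝ) ≤ N := by exact_mod_cast hN
    have hN0 : (0 : ℝ) < N := by linarith
    set Y := (d + 1).factorial * N ^ d with hY
    have hYe : (d + 2) * Y * N = (d + 1 + 1).factorial * N ^ (d + 1) := by
      rw [hY, Nat.factorial_succ (d + 1)]; ring
    set Sg := ∑ k ∈ Finset.Icc 1 ((d + 1 + 1).factorial * N ^ (d + 1)), gg N (k * θ) with hSg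
    have hSg0 : 0 ≤ Sg := Finset.sum_nonneg fun _ _ => gg_nonneg hN0.le _
    have hD : ∀ k ∈ Finset.Icc 1 ((d + 2) * Y * N),
        ((Nat.divisors k).card : ℝ) ≤ K * (N : ℝ) ^ (ε / 2) := by
      intro k hk
      rw [hYe, Finset.mem_Icc] at hk
      refine (hdiv k (by omega)).trans ?_
      have : (k : ℝ) ≤ ((d + 2).factorial : ℝ) * (N : ℝ) ^ (d + 1) := by exact_mod_cast hk.2
      calc C' * (k : ℝ) ^ η ≤ C' * (((d + 2).factorial : ℝ) * (N : ℝ) ^ (d + 1)) ^ η := by gcongr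
        _ = _ := by
          rw [Real.mul_rpow (by positivity) (by positivity), ← Real.rpow_natCast (N : ℝ) (d + 1),
            ← Real.rpow_mul hN0.le, hK, ← mul_assoc]
          congr 2
          rw [hη]; push_cast; field_simp
    have hm := mult_sum (fun k => gg N (k * θ)) (fun _ => gg_nonneg hN0.le _) (d + 2) N Y
      (by omega) _ hD
    rw [hYe, ← hSg] at hm
    set P := (N : ℝ) ^ (ε / 2) with hP
    have hP1 : 1 ≤ P := Real.one_le_rpow hN1 (by positivity)
    have hPP : (N : ℝ) ^ ε = P * P := by
      rw [hP, ← Real.rpow_add hN0]; ring_nf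
    have hsym := sum_sym_le (fun h => TT N d (((d : ℝ) + 2) * (h : ℝ) * θ))
      (fun _ => TT_nonneg _ _ _)
      (fun h => by
        rw [← TT_neg]; push_cast; ring_nf) N
    have hpos : ∑ h ∈ Finset.Ico 1 N, TT N d (((d : ℝ) + 2) * ((h : ℤ) : ℝ) * θ) ≤
        C * P * ((N : ℝ) ^ (d + 1) + K * P * Sg) := by
      have : ∀ h ∈ Finset.Ico 1 N, TT N d (((d : ℝ) + 2) * ((h : ℤ) : ℝ) * θ) ≤
          C * P * ((N : ℝ) ^ d + ∑ k ∈ Finset.Icc 1 Y, gg N (((k * ((d + 2) * h) : ℕ) : ℝ) * θ)) := by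
        intro h _
        refine (hT N hN _).trans (le_of_eq ?_)
        congr 2
        refine Finset.sum_congr rfl fun k _ => ?_
        push_cast
        congr 1
        ring
      refine (Finset.sum_le_sum this).trans ?_
      rw [← Finset.mul_sum, Finset.sum_add_distrib]
      refine mul_le_mul_of_nonneg_left (add_le_add ?_ hm) (by positivity)
      rw [Finset.sum_const, nsmul_eq_mul, pow_succ', Nat.card_Ico]
      refine mul_le_mul_of_nonneg_right ?_ (by positivity)
      exact_mod_cast Nat.sub_le N 1
    have h0 : TT N d (((d : ℝ) + 2) * ((0 : ℕ) : ℤ) * θ) ≤ 2 ^ d * (N : ℝ) ^ (d + 1) := by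
      refine (TT_trivial N d _).trans (le_of_eq ?_)
      rw [mul_pow, pow_succ]; ring
    have hsplit : ∑ h ∈ Finset.range N, TT N d (((d : ℝ) + 2) * ((h : ℤ) : ℝ) * θ) =
        TT N d (((d : ℝ) + 2) * ((0 : ℕ) : ℤ) * θ) +
          ∑ h ∈ Finset.Ico 1 N, TT N d (((d : ℝ) + 2) * ((h : ℤ) : ℝ) * θ) := by
      rw [Finset.range_eq_Ico, Finset.sum_eq_sum_Ico_succ_bot (by omega)]
    rw [hsplit] at hsym
    have hQ : 0 ≤ (N : ℝ) ^ (d + 1) := by positivity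
    rw [hPP]
    change ∑ h ∈ Finset.Ioo (-(N : ℤ)) (N : ℤ), TT N d (((d : ℝ) + 2) * (h : ℝ) * θ) ≤ _
    refine hsym.trans ((mul_le_mul_of_nonneg_left (add_le_add h0 hpos) (by norm_num)).trans ?_)
    set Q := (N : ℝ) ^ (d + 1)
    have hPP1 : P ≤ P * P := by nlinarith
    have hPP2 : 1 ≤ P * P := by nlinarith
    have t1 : 2 ^ d * Q ≤ 2 ^ d * (P * P) * (Q + Sg) := by
      have a : (1 : ℝ) * Q ≤ (P * P) * (Q + Sg) := mul_le_mul hPP2 (by linarith) hQ (by positivity)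
      have := mul_le_mul_of_nonneg_left a (show (0 : ℝ) ≤ 2 ^ d by positivity)
      linarith
    have t2 : C * P * Q ≤ C * (P * P) * (Q + Sg) := by
      have a : P * Q ≤ (P * P) * (Q + Sg) := mul_le_mul hPP1 (by linarith) hQ (by positivity)
      have := mul_le_mul_of_nonneg_left a hC
      linarith
    have t3 : C * K * (P * P) * Sg ≤ C * K * (P * P) * (Q + Sg) :=
      mul_le_mul_of_nonneg_left (by linarith) (by positivity)
    nlinarith

theorem log_bound (ε : ℝ) (hε : 0 < ε) (A : ℝ) (hA : 1 ≤ A) (n : ℕ) (hn : 1 ≤ n) :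
    ∃ c : ℝ, 1 ≤ c ∧ ∀ N q : ℝ, 1 ≤ N → 1 ≤ q → q ≤ A * N ^ n →
      1 + Real.log q ≤ c * N ^ ε := by
  have hn0 : (0 : ℝ) < n := by exact_mod_cast hn
  set η := ε / n with hη
  have hη0 : 0 < η := by positivity
  refine ⟨(1 + 1 / η) * A ^ η, ?_, fun N q hN hq hqA => ?_⟩
  · have h1 : 1 ≤ A ^ η := Real.one_le_rpow hA hη0.le
    have h2 : 0 < 1 / η := by positivity
    nlinarith
  · have h1 := Real.log_le_rpow_div (x := q) (by linarith) hη0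
    have h2 : 1 ≤ q ^ η := Real.one_le_rpow hq hη0.le
    have h3 : q ^ η ≤ A ^ η * N ^ ε := by
      calc q ^ η ≤ (A * N ^ n) ^ η := Real.rpow_le_rpow (by linarith) hqA hη0.le
        _ = _ := by
          rw [Real.mul_rpow (by positivity) (by positivity), ← Real.rpow_natCast N n,
            ← Real.rpow_mul (by positivity), hη]
          congr 2; field_simp
    calc 1 + Real.log q ≤ (1 + 1 / η) * q ^ η := by
          rw [add_mul, one_mul, div_mul_eq_mul_div, one_mul]; linarith
      _ ≤ (1 + 1 / η) * (A ^ η * N ^ ε) := mul_le_mul_of_nonneg_left h3 (by positivity)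
      _ = _ := by ring

open Polynomial in
theorem weyl_bound (n : ℕ) (hn : 2 ≤ n) (Δ : ℝ) (hΔ0 : 0 < Δ) (hΔ1 : Δ < 1) (A : ℝ) (hA : 1 ≤ A)
    (ε : ℝ) (hε : 0 < ε) : ∃ B : ℝ, 0 ≤ B ∧ ∀ N : ℕ, 1 ≤ N → ∀ (θ x : ℝ) (u : ℤ) (q : ℕ), 1 ≤ q →
      Int.gcd u q = 1 → |θ - (u : ℝ) / q| < 1 / (q : ℝ) ^ 2 → (N : ℝ) ^ Δ ≤ q →
      (q : ℝ) ≤ A * (N : ℝ) ^ ((n : ℝ) - Δ) →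
      ‖∑ k ∈ Finset.Ico (1 : ℤ) (N + 1), ee (θ * (k : ℝ) ^ n + x * (k : ℝ))‖ ≤
        B * (N : ℝ) ^ (1 - Δ / 2 ^ (n - 1) + ε) := by
  obtain ⟨d, rfl⟩ : ∃ d, n = d + 1 := ⟨n - 1, by omega⟩
  simp only [Nat.add_sub_cancel]
  set ε₁ := ε * 2 ^ d / 2 with hε₁
  have hε₁0 : 0 < ε₁ := by positivity
  obtain ⟨C, hC, hT⟩ := TT_bound d ε₁ hε₁0
  obtain ⟨c, hc1, hlog⟩ := log_bound ε₁ hε₁0 A hA (d + 1) (by omega)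
  set F : ℝ := ((d + 1).factorial : ℝ) with hF
  have hF0 : 0 ≤ F := by positivity
  set c' : ℝ := 2 ^ (2 ^ d - (d + 1)) * C * ((1 + 6 * F + 6 * F + 6 + 6 * A) * c) with hc'
  have hc'0 : 0 ≤ c' := by positivity
  refine ⟨c' + 1, by positivity, fun N hN θ x u q hq hco hap hqΔ hqA => ?_⟩
  have hN1 : (1 : ℝ) ≤ N := by exact_mod_cast hN
  have hN0 : (0 : ℝ) < N := by linarith
  have hq1 : (1 : ℝ) ≤ q := by exact_mod_cast hq
  have hq0 : (0 : ℝ) < q := by linarith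
  set p : ℝ[X] := Polynomial.C θ * X ^ (d + 1) + Polynomial.C x * X with hp
  have hpdeg : p.natDegree ≤ d + 1 := by
    rw [hp]
    refine (Polynomial.natDegree_add_le _ _).trans (max_le ?_ ?_)
    · exact Polynomial.natDegree_C_mul_X_pow_le _ _
    · refine ((Polynomial.natDegree_C_mul_le _ _).trans Polynomial.natDegree_X_le).trans (by omega)
  have hpc : p.coeff (d + 1) = θ := by
    rw [hp, Polynomial.coeff_add, Polynomial.coeff_C_mul, Polynomial.coeff_C_mul,
      Polynomial.coeff_X_pow, Polynomial.coeff_X]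
    rw [if_pos rfl, if_neg (by omega)]; ring
  have hpe : ∀ k : ℤ, p.eval (k : ℝ) = θ * (k : ℝ) ^ (d + 1) + x * k := by
    intro k; simp [hp]
  have h1 := weyl_diff N hN d p hpdeg 1 (N + 1) (by omega)
  rw [hpc] at h1
  simp only [hpe] at h1
  set S := ‖∑ k ∈ Finset.Ico (1 : ℤ) (N + 1), ee (θ * (k : ℝ) ^ (d + 1) + x * (k : ℝ))‖ with hS
  have h2 := hT N hN θ
  have h3 := long_sum N hN0 θ u q hq hco hap ((d + 1).factorial * N ^ d)
  set W := (N : ℝ) ^ (((d + 1 : ℕ) : ℝ) - Δ) with hW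
  have hW0 : 0 < W := by positivity
  have hqN : (q : ℝ) ≤ A * (N : ℝ) ^ (d + 1) := by
    refine hqA.trans (mul_le_mul_of_nonneg_left ?_ (by linarith))
    rw [← Real.rpow_natCast]
    exact Real.rpow_le_rpow_of_exponent_le hN1 (by linarith)
  have hL := hlog N q hN1 hq1 hqN
  set L := 1 + Real.log q with hLdef
  have hL1 : 1 ≤ L := by
    have := Real.log_nonneg hq1
    linarith
  have hNd : (N : ℝ) ^ d ≤ W := by
    rw [← Real.rpow_natCast, hW]
    apply Real.rpow_le_rpow_of_exponent_le hN1
    push_cast; linarith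
  have hNN : (N : ℝ) ≤ W := by
    refine le_trans ?_ hNd
    exact le_self_pow₀ hN1 (by omega)
  have hNq : (N : ℝ) ^ (d + 1) / q ≤ W := by
    rw [div_le_iff₀ hq0]
    calc (N : ℝ) ^ (d + 1) = W * (N : ℝ) ^ Δ := by
          rw [hW, ← Real.rpow_add hN0, ← Real.rpow_natCast]; congr 1; ring
      _ ≤ _ := mul_le_mul_of_nonneg_left hqΔ hW0.le
  have hsum : (N : ℝ) ^ d + ∑ k ∈ Finset.Icc 1 ((d + 1).factorial * N ^ d), gg N (k * θ) ≤
      (1 + 6 * F + 6 * F + 6 + 6 * A) * (W * L) := by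
    refine (add_le_add le_rfl h3).trans ?_
    push_cast
    rw [← hF]
    have e : (F * (N : ℝ) ^ d / q + 1) * (6 * N + 6 * q * L) =
        6 * F * ((N : ℝ) ^ (d + 1) / q) + 6 * F * ((N : ℝ) ^ d * L) + 6 * N + 6 * (q * L) := by
      field_simp; ring
    rw [e]
    have hWL : W ≤ W * L := le_mul_of_one_le_right hW0.le hL1
    have i1 : 6 * F * ((N : ℝ) ^ (d + 1) / q) ≤ 6 * F * (W * L) :=
      mul_le_mul_of_nonneg_left (hNq.trans hWL) (by positivity)
    have i2 : 6 * F * ((N : ℝ) ^ d * L) ≤ 6 * F * (W * L) :=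
      mul_le_mul_of_nonneg_left (mul_le_mul_of_nonneg_right hNd (by linarith)) (by positivity)
    have i3 : 6 * (q * L) ≤ 6 * (A * W * L) :=
      mul_le_mul_of_nonneg_left (mul_le_mul_of_nonneg_right hqA (by linarith)) (by positivity)
    linarith
  have hd1 : d + 1 ≤ 2 ^ d := Nat.lt_two_pow_self
  have hfin : S ^ (2 ^ d) ≤ c' * ((N : ℝ) ^ (1 - Δ / 2 ^ d + ε)) ^ (2 ^ d) := by
    calc S ^ (2 ^ d) ≤ (2 * (N : ℝ)) ^ (2 ^ d - (d + 1)) * (C * (N : ℝ) ^ ε₁ *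
          ((1 + 6 * F + 6 * F + 6 + 6 * A) * (W * (c * (N : ℝ) ^ ε₁)))) := by
          refine h1.trans (mul_le_mul_of_nonneg_left (h2.trans ?_) (by positivity))
          refine mul_le_mul_of_nonneg_left (hsum.trans ?_) (by positivity)
          refine mul_le_mul_of_nonneg_left ?_ (by positivity)
          exact mul_le_mul_of_nonneg_left hL hW0.le
      _ = c' * ((N : ℝ) ^ (2 ^ d - (d + 1)) * W * (N : ℝ) ^ ε₁ * (N : ℝ) ^ ε₁) := by
          rw [hc', mul_pow]; ring
      _ = _ := by
          congr 1
          rw [← Real.rpow_natCast (N : ℝ) (2 ^ d - (d + 1)), hW, ← Real.rpow_add hN0,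
            ← Real.rpow_add hN0, ← Real.rpow_add hN0, ← Real.rpow_natCast, ← Real.rpow_mul hN0.le]
          congr 1
          rw [Nat.cast_sub hd1, hε₁]
          push_cast
          field_simp
          ring
  have h2d : (2 ^ d : ℕ) ≠ 0 := by positivity
  refine (pow_le_pow_iff_left₀ (norm_nonneg _) (by positivity) h2d).mp ?_
  refine hfin.trans ?_
  rw [mul_pow]
  refine mul_le_mul_of_nonneg_right ?_ (by positivity)
  have : c' + 1 ≤ (c' + 1) ^ (2 ^ d) := le_self_pow₀ (by linarith) h2d
  linarith

theorem abel_id (w : ℕ → ℝ) (b : ℕ → ℂ) (K : ℕ) :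
    ∑ k ∈ Finset.range K, (w k : ℂ) * b k = (w K : ℂ) * ∑ k ∈ Finset.range K, b k +
      ∑ k ∈ Finset.range K, ((w k - w (k + 1) : ℝ) : ℂ) * ∑ i ∈ Finset.range (k + 1), b i := by
  induction K with
  | zero => simp
  | succ K ih =>
    rw [Finset.sum_range_succ, ih, Finset.sum_range_succ _ K, Finset.sum_range_succ _ K,
      Finset.sum_range_succ _ K]
    push_cast
    ring

theorem weight_diff (ψ : ℝ → ℝ) (D : ℝ) (hD : 0 ≤ D) (hL : ∀ x y, |ψ x - ψ y| ≤ D * |x - y|)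
    (h2 : ∀ x, 2 ≤ x → ψ x = 0) (τ : ℝ) (hτ : 0 < τ) (j : ℝ) (hj : 1 ≤ j) :
    |1 - ψ (j * τ)| ≤ 1 + 2 * D ∧
    |(1 - ψ (j * τ)) / j - (1 - ψ ((j + 1) * τ)) / (j + 1)| ≤ (1 + 4 * D) / j ^ 2 := by
  have hj0 : 0 < j := by linarith
  have hb : |1 - ψ (j * τ)| ≤ 1 + 2 * D := by
    have : |ψ (j * τ)| ≤ 2 * D := by
      rcases le_or_gt 2 (j * τ) with h | h
      · rw [h2 _ h]; simp; positivity
      · have := hL (j * τ) 2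
        rw [h2 2 le_rfl, sub_zero] at this
        refine this.trans ?_
        have h3 : 0 < j * τ := by positivity
        have : |j * τ - 2| ≤ 2 := by rw [abs_le]; constructor <;> linarith
        nlinarith
    refine (abs_sub _ _).trans ?_
    rw [abs_one]; linarith
  refine ⟨hb, ?_⟩
  have hdiff : |ψ ((j + 1) * τ) - ψ (j * τ)| ≤ 2 * D / j := by
    rcases le_or_gt 2 (j * τ) with h | h
    · rw [h2 _ h, h2 _ (by nlinarith)]; simp; positivity
    · refine (hL _ _).trans ?_
      rw [show (j + 1) * τ - j * τ = τ by ring, abs_of_pos hτ, le_div_iff₀ hj0]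
      nlinarith
  have e : (1 - ψ (j * τ)) / j - (1 - ψ ((j + 1) * τ)) / (j + 1) =
      (1 - ψ (j * τ)) * (1 / (j * (j + 1))) + (ψ ((j + 1) * τ) - ψ (j * τ)) * (1 / (j + 1)) := by
    field_simp; ring
  rw [e]
  refine (abs_add_le _ _).trans ?_
  rw [abs_mul, abs_mul, abs_of_pos (show 0 < 1 / (j * (j + 1)) by positivity),
    abs_of_pos (show 0 < 1 / (j + 1) by positivity)]
  have i1 : |1 - ψ (j * τ)| * (1 / (j * (j + 1))) ≤ (1 + 2 * D) * (1 / (j * j)) := by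
    apply mul_le_mul hb _ (by positivity) (by positivity)
    apply one_div_le_one_div_of_le (by positivity)
    nlinarith
  have i2 : |ψ ((j + 1) * τ) - ψ (j * τ)| * (1 / (j + 1)) ≤ 2 * D / j * (1 / j) := by
    apply mul_le_mul hdiff _ (by positivity) (by positivity)
    apply one_div_le_one_div_of_le (by positivity)
    linarith
  refine (add_le_add i1 i2).trans (le_of_eq ?_)
  field_simp; ring

theorem abel_tail (ψ : ℝ → ℝ) (D : ℝ) (hD : 0 ≤ D) (hL : ∀ x y, |ψ x - ψ y| ≤ D * |x - y|)
    (h1 : ∀ x, 0 ≤ x → x ≤ 1 / 2 → ψ x = 1) (h2 : ∀ x, 2 ≤ x → ψ x = 0)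
    (δ η : ℝ) (hη : 0 < η) (hηδ : η < δ) :
    ∃ C : ℝ, 0 ≤ C ∧ ∀ τ : ℝ, 0 < τ → ∀ B : ℝ, 0 ≤ B → ∀ b : ℕ → ℂ,
      (∀ N : ℕ, 1 ≤ N → 1 / (4 * τ) ≤ N →
        ‖∑ k ∈ Finset.range N, b k‖ ≤ B * (N : ℝ) ^ (1 - δ)) →
      ∃ l : ℂ, Tendsto (fun K : ℕ => ∑ k ∈ Finset.range K,
        (((1 - ψ (((k : ℝ) + 1) * τ)) / ((k : ℝ) + 1) : ℝ) : ℂ) * b k) atTop (nhds l) ∧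
        ‖l‖ ≤ C * B * τ ^ (δ - η) := by
  have hZ : Summable (fun k : ℕ => ((k : ℝ) + 1) ^ (-(1 + η))) := by
    have := (Real.summable_nat_rpow (p := -(1 + η))).mpr (by linarith)
    have := (summable_nat_add_iff 1).mpr this
    simpa using this
  set Z := ∑' k : ℕ, ((k : ℝ) + 1) ^ (-(1 + η)) with hZdef
  have hZ0 : 0 ≤ Z := tsum_nonneg fun k => by positivity
  refine ⟨(1 + 4 * D) * 4 ^ (δ - η) * Z, by positivity, fun τ hτ B hB b hb => ?_⟩
  set w : ℕ → ℝ := fun k => (1 - ψ (((k : ℝ) + 1) * τ)) / ((k : ℝ) + 1) with hw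
  set v : ℕ → ℂ := fun k => ((w k - w (k + 1) : ℝ) : ℂ) * ∑ i ∈ Finset.range (k + 1), b i with hv
  set Q := (1 + 4 * D) * 4 ^ (δ - η) * B * τ ^ (δ - η) with hQ
  have hvb : ∀ k, ‖v k‖ ≤ Q * ((k : ℝ) + 1) ^ (-(1 + η)) := by
    intro k
    set j : ℝ := (k : ℝ) + 1 with hj
    have hj1 : 1 ≤ j := by rw [hj]; linarith [Nat.cast_nonneg (α := ℝ) k]
    have hj0 : 0 < j := by linarith
    have hwk : w k - w (k + 1) = (1 - ψ (j * τ)) / j - (1 - ψ ((j + 1) * τ)) / (j + 1) := by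
      simp only [hw, hj]; push_cast; ring_nf
    rcases le_or_gt ((j + 1) * τ) (1 / 2) with hc | hc
    · have : v k = 0 := by
        simp only [hv]
        rw [hwk, h1 _ (by positivity) hc, h1 _ (by positivity) (by nlinarith)]
        simp
      rw [this, norm_zero]; positivity
    · have hjτ : 1 / (4 * τ) ≤ j := by
        rw [div_le_iff₀ (by positivity)]; nlinarith
      have hS := hb (k + 1) (by omega) (by push_cast; exact hjτ)
      push_cast at hS
      rw [← hj] at hS
      simp only [hv]
      rw [norm_mul, Complex.norm_real, Real.norm_eq_abs, hwk]
      have hjs : j ^ (-(δ - η)) ≤ 4 ^ (δ - η) * τ ^ (δ - η) := by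
        rw [← Real.mul_rpow (by norm_num) hτ.le, Real.rpow_neg hj0.le, ← Real.inv_rpow hj0.le]
        apply Real.rpow_le_rpow (by positivity) _ (by linarith)
        rw [inv_le_comm₀ hj0 (by positivity), ← one_div]
        exact hjτ
      calc _ ≤ (1 + 4 * D) / j ^ 2 * (B * j ^ (1 - δ)) :=
            mul_le_mul (weight_diff ψ D hD hL h2 τ hτ j hj1).2 hS (norm_nonneg _) (by positivity)
        _ = (1 + 4 * D) * B * (j ^ (-(δ - η)) * j ^ (-(1 + η))) := by
            rw [← Real.rpow_add hj0, div_eq_mul_inv, ← Real.rpow_natCast, ← Real.rpow_neg hj0.le]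
            rw [show (1 + 4 * D) * j ^ (-((2 : ℕ) : ℝ)) * (B * j ^ (1 - δ)) =
              (1 + 4 * D) * B * (j ^ (-((2 : ℕ) : ℝ)) * j ^ (1 - δ)) by ring, ← Real.rpow_add hj0]
            congr 2; push_cast; ring
        _ ≤ (1 + 4 * D) * B * ((4 ^ (δ - η) * τ ^ (δ - η)) * j ^ (-(1 + η))) := by gcongr
        _ = _ := by rw [hQ]; ring
  have hsumb : Summable (fun k : ℕ => Q * ((k : ℝ) + 1) ^ (-(1 + η))) := hZ.mul_left Q
  have hvs : Summable v := Summable.of_norm_bounded hsumb hvb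
  refine ⟨∑' k, v k, ?_, ?_⟩
  · have t1 : Tendsto (fun K : ℕ => (w K : ℂ) * ∑ k ∈ Finset.range K, b k) atTop (nhds 0) := by
      rw [tendsto_zero_iff_norm_tendsto_zero]
      have t0 : Tendsto (fun K : ℕ => (1 + 2 * D) * B * (K : ℝ) ^ (-δ)) atTop (nhds 0) := by
        have := ((tendsto_rpow_neg_atTop (y := δ) (by linarith)).comp
          tendsto_natCast_atTop_atTop).const_mul ((1 + 2 * D) * B)
        rw [mul_zero] at this
        exact this
      refine squeeze_zero' (Eventually.of_forall fun _ => norm_nonneg _) ?_ t0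
      filter_upwards [eventually_ge_atTop (max 1 ⌈1 / (4 * τ)⌉₊)] with K hK
      have hK1 : 1 ≤ K := (le_max_left _ _).trans hK
      have hKR : (1 : ℝ) ≤ K := by exact_mod_cast hK1
      have hK0 : (0 : ℝ) < K := by linarith
      have hS := hb K hK1 ((Nat.le_ceil _).trans (by exact_mod_cast (le_max_right _ _).trans hK))
      rw [norm_mul, Complex.norm_real, Real.norm_eq_abs]
      have hwK : |w K| ≤ (1 + 2 * D) / K := by
        simp only [hw]
        rw [abs_div, abs_of_pos (show (0 : ℝ) < K + 1 by positivity)]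
        apply div_le_div₀ (by positivity)
          (weight_diff ψ D hD hL h2 τ hτ (K + 1) (by linarith)).1 hK0 (by linarith)
      refine (mul_le_mul hwK hS (norm_nonneg _) (by positivity)).trans (le_of_eq ?_)
      rw [show (1 - δ) = 1 + (-δ) by ring, Real.rpow_add hK0, Real.rpow_one]
      field_simp
    have t2 := hvs.hasSum.tendsto_sum_nat
    have := t1.add t2
    rw [zero_add] at this
    refine this.congr fun K => ?_
    exact (abel_id w b K).symm
  · refine (tsum_of_norm_bounded (hsumb.hasSum) hvb).trans (le_of_eq ?_)
    rw [tsum_mul_left, hQ]; ring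

theorem sum_Ico_int (f : ℤ → ℂ) (N : ℕ) :
    ∑ k ∈ Finset.Ico (1 : ℤ) (N + 1), f k = ∑ k ∈ Finset.range N, f ((k : ℤ) + 1) := by
  induction N with
  | zero => simp
  | succ N ih =>
    rw [Finset.sum_range_succ, ← ih]
    have : Finset.Ico (1 : ℤ) (((N + 1 : ℕ) : ℤ) + 1) = 
        insert ((N : ℤ) + 1) (Finset.Ico (1 : ℤ) ((N : ℤ) + 1)) := by
      ext k; simp only [Finset.mem_insert, Finset.mem_Ico]; push_cast; omega
    rw [this, Finset.sum_insert (by simp), add_comm]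

theorem sum_Icc_int (f : ℤ → ℂ) (N : ℕ) :
    ∑ k ∈ (Finset.Icc (-(N : ℤ)) (N : ℤ)).filter (· ≠ 0), f k =
      ∑ k ∈ Finset.range N, (f ((k : ℤ) + 1) + f (-((k : ℤ) + 1))) := by
  induction N with
  | zero => simp [Finset.filter_singleton]
  | succ N ih =>
    rw [Finset.sum_range_succ, ← ih]
    have : (Finset.Icc (-((N + 1 : ℕ) : ℤ)) ((N + 1 : ℕ) : ℤ)).filter (· ≠ 0) =
        insert ((N : ℤ) + 1) (insert (-((N : ℤ) + 1))
          ((Finset.Icc (-(N : ℤ)) (N : ℤ)).filter (· ≠ 0))) := by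
      ext k; simp only [Finset.mem_insert, Finset.mem_filter, Finset.mem_Icc]; push_cast; omega
    rw [this, Finset.sum_insert, Finset.sum_insert]
    · ring
    · simp
    · simp only [Finset.mem_insert, Finset.mem_filter, Finset.mem_Icc]; omega

theorem sin_ee (y : ℝ) :
    ((Real.sin (2 * Real.pi * y) : ℝ) : ℂ) = (ee y - ee (-y)) * (1 / (2 * Complex.I)) := by
  unfold ee
  rw [Complex.ofReal_sin, Complex.sin]
  have hI := Complex.I_ne_zero
  rw [show (2 * Real.pi * Complex.I * (y : ℝ) : ℂ) = ((2 * Real.pi * y : ℝ) : ℂ) * Complex.I by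
    push_cast; ring]
  rw [show (2 * Real.pi * Complex.I * ((-y : ℝ) : ℂ) : ℂ) =
    -((2 * Real.pi * y : ℝ) : ℂ) * Complex.I by push_cast; ring]
  field_simp
  rw [Complex.I_sq]
  ring

theorem sin_sum (n : ℕ) (γ θ x R : ℝ) (N : ℕ)
    (h : ∀ y : ℝ, ‖∑ k ∈ Finset.Ico (1 : ℤ) (N + 1), ee (θ * (k : ℝ) ^ n + y * (k : ℝ))‖ ≤ R) :
    ‖∑ k ∈ Finset.range N, ((Real.sin (2 * Real.pi * γ * ((k : ℝ) + 1)) : ℝ) : ℂ) *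
      ee (θ * ((k : ℝ) + 1) ^ n + x * ((k : ℝ) + 1))‖ ≤ R := by
  have e : ∑ k ∈ Finset.range N, ((Real.sin (2 * Real.pi * γ * ((k : ℝ) + 1)) : ℝ) : ℂ) *
      ee (θ * ((k : ℝ) + 1) ^ n + x * ((k : ℝ) + 1)) =
      (1 / (2 * Complex.I)) *
        (∑ k ∈ Finset.Ico (1 : ℤ) (N + 1), ee (θ * (k : ℝ) ^ n + (x + γ) * (k : ℝ)) -
        ∑ k ∈ Finset.Ico (1 : ℤ) (N + 1), ee (θ * (k : ℝ) ^ n + (x - γ) * (k : ℝ))) := by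
    rw [sum_Ico_int, sum_Ico_int, ← Finset.sum_sub_distrib, Finset.mul_sum]
    refine Finset.sum_congr rfl fun k _ => ?_
    push_cast
    rw [← Complex.ofReal_one, ← Complex.ofReal_natCast]
    have e0 := sin_ee (γ * ((k : ℝ) + 1))
    rw [← mul_assoc] at e0
    have e1 : ee (θ * ((k : ℝ) + 1) ^ n + (x + γ) * ((k : ℝ) + 1)) =
        ee (γ * ((k : ℝ) + 1)) * ee (θ * ((k : ℝ) + 1) ^ n + x * ((k : ℝ) + 1)) := by
      rw [← ee_add]; ring_nf
    have e2 : ee (θ * ((k : ℝ) + 1) ^ n + (x - γ) * ((k : ℝ) + 1)) =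
        ee (-(γ * ((k : ℝ) + 1))) * ee (θ * ((k : ℝ) + 1) ^ n + x * ((k : ℝ) + 1)) := by
      rw [← ee_add]; ring_nf
    rw [e1, e2]
    push_cast at e0 ⊢
    rw [e0]; ring
  rw [e, norm_mul]
  have hn : ‖(1 / (2 * Complex.I) : ℂ)‖ = 1 / 2 := by simp
  rw [hn]
  have := norm_sub_le (∑ k ∈ Finset.Ico (1 : ℤ) (N + 1), ee (θ * (k : ℝ) ^ n + (x + γ) * (k : ℝ)))
    (∑ k ∈ Finset.Ico (1 : ℤ) (N + 1), ee (θ * (k : ℝ) ^ n + (x - γ) * (k : ℝ)))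
  linarith [h (x + γ), h (x - γ)]

theorem phi_lip (φ : ℝ → ℝ) (hφ : GoodPhi φ) :
    ∃ D : ℝ, 0 ≤ D ∧ ∀ x y, |φ x - φ y| ≤ D * |x - y| := by
  obtain ⟨h1, _, h3, _⟩ := hφ
  have hcs : HasCompactSupport φ := by
    refine HasCompactSupport.intro (K := Set.Icc (-2) 2) isCompact_Icc fun x hx => ?_
    apply h3
    by_contra h
    rw [not_le, abs_lt] at h
    exact hx ⟨h.1.le, h.2.le⟩
  obtain ⟨C, hC⟩ := ContDiff.lipschitzWith_of_hasCompactSupport (𝕂 := ℝ) hcs h1 (by simp)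
  refine ⟨C, C.2, fun x y => ?_⟩
  have := hC.dist_le_mul x y
  simpa [Real.dist_eq] using this

/-- Bound for the Weyl sums attached to elements of `ℬ`. -/
theorem bset_weyl (n : ℕ) (hn : 2 ≤ n) (Δ : ℝ) (hΔ0 : 0 < Δ) (hΔ1 : Δ < 1)
    (m : ℤ) (hm : 2 ≤ m) (α : ℝ) (ε : ℝ) (hε : 0 < ε) :
    ∃ B : ℝ, 0 ≤ B ∧ ∀ t : ℝ, t ∈ Bset n Δ m α → ∀ θ : ℝ, (θ = t ∨ θ = -t) → ∀ N : ℕ, 1 ≤ N →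
      1 / (4 * t ^ α) ≤ N → ∀ x : ℝ,
      ‖∑ k ∈ Finset.Ico (1 : ℤ) (N + 1), ee (θ * (k : ℝ) ^ n + x * (k : ℝ))‖ ≤
        B * (N : ℝ) ^ (1 - Δ / 2 ^ (n - 1) + ε) := by
  have hmR : (2 : ℝ) ≤ m := by exact_mod_cast hm
  have hnR : (2 : ℝ) ≤ n := by exact_mod_cast hn
  have hnΔ : 0 ≤ (n : ℝ) - Δ := by linarith
  obtain ⟨B, hB, hW⟩ := weyl_bound n hn Δ hΔ0 hΔ1 ((4 * m : ℝ) ^ ((n : ℝ) - Δ))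
    (Real.one_le_rpow (by linarith) hnΔ) ε hε
  refine ⟨B, hB, fun t ht θ hθ N hN hNt x => ?_⟩
  obtain ⟨⟨ht0, ht1⟩, hM⟩ := ht
  have hτ : 0 < t ^ α := Real.rpow_pos_of_pos ht0 α
  have hN1 : (1 : ℝ) ≤ N := by exact_mod_cast hN
  obtain ⟨u, q, ⟨hq, hco, hap⟩, hq1, hq2⟩ := hM (max N (m * t ^ (-α))) (le_max_right _ _)
  set M : ℝ := max N (m * t ^ (-α)) with hMdef
  have hM1 : (N : ℝ) ≤ M := le_max_left _ _
  have hM2 : M ≤ 4 * m * N := by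
    apply max_le
    · nlinarith
    · rw [Real.rpow_neg ht0.le]
      rw [div_le_iff₀ (by positivity)] at hNt
      rw [← div_eq_mul_inv, div_le_iff₀ hτ]
      nlinarith
  lift q to ℕ using (by omega)
  have hqn : 1 ≤ q := by exact_mod_cast hq
  simp only [Int.cast_natCast] at hap hq1 hq2
  have c1 : (N : ℝ) ^ Δ ≤ q := (Real.rpow_le_rpow (by positivity) hM1 hΔ0.le).trans hq1.le
  have c2 : (q : ℝ) ≤ (4 * m : ℝ) ^ ((n : ℝ) - Δ) * (N : ℝ) ^ ((n : ℝ) - Δ) := by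
    rw [← Real.mul_rpow (by positivity) (by positivity)]
    exact hq2.trans (Real.rpow_le_rpow (by linarith) hM2 hnΔ)
  rcases hθ with rfl | rfl
  · exact hW N hN _ x u q hqn hco hap c1 c2
  · refine hW N hN _ x (-u) q hqn (by rw [Int.neg_gcd]; exact hco) ?_ c1 c2
    rw [← abs_neg]
    convert hap using 2
    push_cast; ring

theorem ustar_eq (n : ℕ) (γ : ℝ) (φ : ℝ → ℝ) (h3 : ∀ x : ℝ, 2 ≤ |x| → φ x = 0) (α t x : ℝ)
    (hτ : 0 < t ^ α) (K : ℕ) (hK : 2 / t ^ α ≤ K) :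
    Ustar n γ φ α t x = Complex.ofReal (2 * γ) + Complex.ofReal (1 / Real.pi) *
      ∑ k ∈ (Finset.Icc (-(K : ℤ)) (K : ℤ)).filter (· ≠ 0),
      Complex.ofReal (φ ((k : ℝ) * t ^ α) * (Real.sin (2 * Real.pi * γ * (k : ℝ)) / (k : ℝ))) *
        ee (t * (k : ℝ) ^ n + x * (k : ℝ)) := by
  unfold Ustar
  congr 2
  apply tsum_eq_sum
  intro k hk
  simp only [Finset.mem_filter, Finset.mem_Icc, not_and_or, not_not] at hk
  by_cases h0 : k = 0
  · subst h0; simp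
  · have hk' : (K : ℤ) + 1 ≤ |k| := by
      rcases hk with hk | hk
      · rcases abs_cases k with h | h <;> omega
      · exact absurd hk h0
    have hkR : (K : ℝ) + 1 ≤ |(k : ℝ)| := by exact_mod_cast hk'
    rw [h3, zero_mul]
    · simp
    · rw [abs_mul, abs_of_pos hτ]
      rw [div_le_iff₀ hτ] at hK
      nlinarith

theorem diff_eq (n : ℕ) (γ : ℝ) (φ : ℝ → ℝ) (h3 : ∀ x : ℝ, 2 ≤ |x| → φ x = 0) (α t x : ℝ)
    (hτ : 0 < t ^ α) (K : ℕ) (hK : 2 / t ^ α ≤ K) :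
    Upartial n γ t x K = Ustar n γ φ α t x + Complex.ofReal (1 / Real.pi) *
      (∑ k ∈ Finset.range K, (((1 - φ (((k : ℝ) + 1) * t ^ α)) / ((k : ℝ) + 1) : ℝ) : ℂ) *
        (((Real.sin (2 * Real.pi * γ * ((k : ℝ) + 1)) : ℝ) : ℂ) *
          ee (t * ((k : ℝ) + 1) ^ n + x * ((k : ℝ) + 1))) +
      ∑ k ∈ Finset.range K, (((1 - φ (-(((k : ℝ) + 1) * t ^ α))) / ((k : ℝ) + 1) : ℝ) : ℂ) *
        (((Real.sin (2 * Real.pi * γ * ((k : ℝ) + 1)) : ℝ) : ℂ) *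
          ee (((-1) ^ n * t) * ((k : ℝ) + 1) ^ n + (-x) * ((k : ℝ) + 1)))) := by
  rw [ustar_eq n γ φ h3 α t x hτ K hK]
  unfold Upartial
  rw [sum_Icc_int, sum_Icc_int, add_assoc, ← mul_add, ← Finset.sum_add_distrib,
    ← Finset.sum_add_distrib, Finset.mul_sum]
  congr 1
  refine Finset.sum_congr rfl fun k _ => ?_
  have hc : (((k : ℤ) + 1 : ℤ) : ℝ) = (k : ℝ) + 1 := by push_cast; ring
  have hc' : ((-((k : ℤ) + 1) : ℤ) : ℝ) = -((k : ℝ) + 1) := by push_cast; ring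
  rw [hc, hc']
  have hj : (k : ℝ) + 1 ≠ 0 := by positivity
  generalize (k : ℝ) + 1 = j at hj
  have hπ := Real.pi_ne_zero
  rw [show t * (-j) ^ n + x * (-j) = (-1) ^ n * t * j ^ n + -x * j by rw [neg_pow]; ring]
  generalize ee (t * j ^ n + x * j) = E1
  generalize ee ((-1) ^ n * t * j ^ n + -x * j) = E2
  rw [show 2 * Real.pi * γ * -j = -(2 * Real.pi * γ * j) by ring, Real.sin_neg, neg_mul]
  generalize Real.sin (2 * Real.pi * γ * j) = s
  generalize φ (j * t ^ α) = p1
  generalize φ (-(j * t ^ α)) = p2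
  have hjC : (j : ℂ) ≠ 0 := by exact_mod_cast hj
  have hπC : (Real.pi : ℂ) ≠ 0 := by exact_mod_cast hπ
  push_cast
  field_simp
  ring

/-- for irrational `t ∈ ℬ_{m,α}` the limit defining `U(t,x)` exists and
`U(t,x) = U*(t,x) + O(t^{αΔ/2^{n−1}−ε})`, uniformly in `x`. -/
theorem stmt15 (n : ℕ) (hn : 2 ≤ n) (Δ : ℝ) (hΔ0 : 0 < Δ) (hΔ1 : Δ < 1)
    (hΔ2 : n = 2 → Δ < 1 / 2) (γ : ℝ) (hγ : γ ∈ Set.Ioo (0 : ℝ) (1 / 2))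
    (m : ℤ) (hm : 2 ≤ m) (α : ℝ) (hα1 : ((n : ℝ) - Δ)⁻¹ < α) (hα2 : α < ((n : ℝ) - 1)⁻¹)
    (ε : ℝ) (hε : 0 < ε) (φ : ℝ → ℝ) (hφ : GoodPhi φ) :
    ∃ C > (0 : ℝ), ∀ t : ℝ, Irrational t → t ∈ Bset n Δ m α → ∀ x : ℝ,
      ∃ L : ℂ, Tendsto (fun K : ℕ => Upartial n γ t x K) atTop (nhds L) ∧
        ‖L - Ustar n γ φ α t x‖ ≤ C * t ^ (α * Δ / 2 ^ (n - 1) - ε) := by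
  have hnR : (2 : ℝ) ≤ n := by exact_mod_cast hn
  have hα0 : 0 < α := lt_trans (inv_pos.mpr (by linarith)) hα1
  obtain ⟨D, hD, hLip⟩ := phi_lip φ hφ
  obtain ⟨_, hp1, hp2, _⟩ := hφ
  set δ := Δ / 2 ^ (n - 1) with hδ
  have hδ0 : 0 < δ := by positivity
  set η := min (δ / 2) (ε / α) / 2 with hη
  have hη0 : 0 < η := by positivity
  have hη1 : 2 * η ≤ δ / 2 := by
    rw [hη]; linarith [min_le_left (δ / 2) (ε / α)]
  have hη2 : 2 * η * α ≤ ε := by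
    rw [← le_div_iff₀ hα0, hη]; linarith [min_le_right (δ / 2) (ε / α)]
  obtain ⟨B, hB, hW⟩ := bset_weyl n hn Δ hΔ0 hΔ1 m hm α η hη0
  obtain ⟨C1, hC1, hT1⟩ := abel_tail φ D hD hLip
    (fun x hx0 hx => hp1 x (by rwa [abs_of_nonneg hx0]))
    (fun x hx => hp2 x (hx.trans (le_abs_self x))) (δ - η) η hη0 (by linarith)
  obtain ⟨C2, hC2, hT2⟩ := abel_tail (fun x => φ (-x)) D hD
    (fun x y => by
      refine (hLip (-x) (-y)).trans (le_of_eq ?_)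
      rw [← abs_neg]; ring_nf)
    (fun x hx0 hx => hp1 (-x) (by rwa [abs_neg, abs_of_nonneg hx0]))
    (fun x hx => hp2 (-x) (by rw [abs_neg]; exact hx.trans (le_abs_self x)))
    (δ - η) η hη0 (by linarith)
  refine ⟨(C1 + C2) * B + 1, by positivity, fun t _ ht x => ?_⟩
  have ht0 : 0 < t := ht.1.1
  have ht1 : t ≤ 1 := ht.1.2
  have hτ : 0 < t ^ α := Real.rpow_pos_of_pos ht0 α
  have hexp : 1 - δ + η = 1 - (δ - η) := by ring
  rw [hexp] at hW
  obtain ⟨l1, hl1, hb1⟩ := hT1 (t ^ α) hτ B hB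
    (fun k : ℕ => ((Real.sin (2 * Real.pi * γ * ((k : ℝ) + 1)) : ℝ) : ℂ) *
      ee (t * ((k : ℝ) + 1) ^ n + x * ((k : ℝ) + 1)))
    (fun N hN hNt => sin_sum n γ t x _ N (hW t ht t (Or.inl rfl) N hN hNt))
  have hsg : (-1) ^ n * t = t ∨ (-1) ^ n * t = -t := by
    rcases neg_one_pow_eq_or ℝ n with h | h <;> rw [h] <;> simp
  obtain ⟨l2, hl2, hb2⟩ := hT2 (t ^ α) hτ B hB
    (fun k : ℕ => ((Real.sin (2 * Real.pi * γ * ((k : ℝ) + 1)) : ℝ) : ℂ) *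
      ee (((-1) ^ n * t) * ((k : ℝ) + 1) ^ n + (-x) * ((k : ℝ) + 1)))
    (fun N hN hNt => sin_sum n γ _ (-x) _ N (hW t ht _ hsg N hN hNt))
  refine ⟨Ustar n γ φ α t x + Complex.ofReal (1 / Real.pi) * (l1 + l2), ?_, ?_⟩
  · refine Tendsto.congr' ?_ (tendsto_const_nhds.add ((hl1.add hl2).const_mul _))
    filter_upwards [eventually_ge_atTop ⌈2 / t ^ α⌉₊] with K hK
    exact (diff_eq n γ φ hp2 α t x hτ K ((Nat.le_ceil _).trans (by exact_mod_cast hK))).symm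
  · rw [add_sub_cancel_left, norm_mul, Complex.norm_real, Real.norm_eq_abs,
      abs_of_pos (by positivity)]
    have hpi : 1 / Real.pi ≤ 1 := by
      rw [div_le_one Real.pi_pos]; linarith [Real.pi_gt_three]
    have hpow : (t ^ α) ^ (δ - η - η) ≤ t ^ (α * Δ / 2 ^ (n - 1) - ε) := by
      rw [← Real.rpow_mul ht0.le]
      apply Real.rpow_le_rpow_of_exponent_ge ht0 ht1
      rw [mul_div_assoc, ← hδ]
      nlinarith
    set T := t ^ (α * Δ / 2 ^ (n - 1) - ε) with hTdef
    have hT0 : 0 < T := Real.rpow_pos_of_pos ht0 _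
    calc 1 / Real.pi * ‖l1 + l2‖ ≤ 1 * (‖l1‖ + ‖l2‖) :=
          mul_le_mul hpi (norm_add_le _ _) (norm_nonneg _) (by norm_num)
      _ ≤ C1 * B * T + C2 * B * T := by
          rw [one_mul]
          refine add_le_add (hb1.trans ?_) (hb2.trans ?_)
          · exact mul_le_mul_of_nonneg_left hpow (by positivity)
          · exact mul_le_mul_of_nonneg_left hpow (by positivity)
      _ ≤ _ := by nlinarith
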